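/- For every integer g ≥ 1, the set of points (a′,b′) ∈ ℕ×ℕ with a′ − b′ = g that are possible A0′ (i.e. arise as end points of admissible chains) is finite. -/

import Mathlib

open MvPolynomial

noncomputable section

variable {K : Type*} [Field K] [CharZero K]

/-- The support of `P` as a set of pairs `(i,j)` of exponents of `x^i y^j`. -/
def Supp (P : MvPolynomial (Fin 2) K) : Set (ℕ × ℕ) :=
  {p | MvPolynomial.coeff (Finsupp.single 0 p.1 + Finsupp.single 1 p.2) P ≠ 0}

/-- The Jacobian bracket `[P,Q] = ∂ₓP ∂_yQ − ∂ₓQ ∂_yP`. -/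
def Jb (P Q : MvPolynomial (Fin 2) K) : MvPolynomial (Fin 2) K :=
  pderiv 0 P * pderiv 1 Q - pderiv 0 Q * pderiv 1 P

/-- The `(ρ,σ)`-degree `v_{ρ,σ}(P)` (the maximum of `ρi+σj` on the support). -/
def wdeg (ρ σ : ℤ) (P : MvPolynomial (Fin 2) K) : ℤ :=
  sSup {d : ℤ | ∃ p ∈ Supp P, d = ρ * (p.1 : ℤ) + σ * (p.2 : ℤ)}

/-- The support of the `(ρ,σ)`-leading form of `P`. -/
def LeadSupp (ρ σ : ℤ) (P : MvPolynomial (Fin 2) K) : Set (ℕ × ℕ) :=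
  {p | p ∈ Supp P ∧ ρ * (p.1 : ℤ) + σ * (p.2 : ℤ) = wdeg ρ σ P}

/-- `P` is `(ρ,σ)`-homogeneous. -/
def IsHomog (ρ σ : ℤ) (P : MvPolynomial (Fin 2) K) : Prop :=
  ∀ p ∈ Supp P, ∀ q ∈ Supp P,
    ρ * (p.1 : ℤ) + σ * (p.2 : ℤ) = ρ * (q.1 : ℤ) + σ * (q.2 : ℤ)

/-- `P` is a monomial: its support has at most one point. -/
def IsMonomial (P : MvPolynomial (Fin 2) K) : Prop := (Supp P).Subsingleton

/-- `e` is the point `en_{ρ,σ}(P)`: the point of the support of the leading form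
with largest second coordinate. -/
def IsEn (ρ σ : ℤ) (P : MvPolynomial (Fin 2) K) (e : ℕ × ℕ) : Prop :=
  e ∈ LeadSupp ρ σ P ∧ ∀ q ∈ LeadSupp ρ σ P, q.2 ≤ e.2

/-- `e` is the point `st_{ρ,σ}(P)`: the point of the support of the leading form
with smallest second coordinate. -/
def IsSt (ρ σ : ℤ) (P : MvPolynomial (Fin 2) K) (e : ℕ × ℕ) : Prop :=
  e ∈ LeadSupp ρ σ P ∧ ∀ q ∈ LeadSupp ρ σ P, e.2 ≤ q.2

/-- An admissible chain of length `k`: points `C 0, …, C k`, polynomials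
`Rp 1, …, Rp k` and directions `dir 1, …, dir k` satisfying conditions
(i)–(viii) of Definition "cadena admisible". -/
structure AdmChain (K : Type*) [Field K] [CharZero K] (k : ℕ) where
  C : ℕ → ℕ × ℕ
  Rp : ℕ → MvPolynomial (Fin 2) K
  dir : ℕ → ℤ × ℤ
  hdir : ∀ j, 1 ≤ j → j ≤ k →
    Int.gcd (dir j).1 (dir j).2 = 1 ∧ 0 < (dir j).1 ∧ (dir j).1 + (dir j).2 < 0
  hC0 : ∃ l : ℕ, 1 ≤ l ∧ C 0 = (l, 0)
  hincr : ∀ j, 2 ≤ j → j ≤ k →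
    0 < (dir (j - 1)).1 * (dir j).2 - (dir (j - 1)).2 * (dir j).1
  hhom : ∀ j, 1 ≤ j → j ≤ k → IsHomog (dir j).1 (dir j).2 (Rp j)
  hmono : ∀ j, 1 ≤ j → j ≤ k → ¬ IsMonomial (Rp j)
  hst : ∀ j, 1 ≤ j → j ≤ k → IsSt (dir j).1 (dir j).2 (Rp j) (C (j - 1))
  hen : ∀ j, 1 ≤ j → j ≤ k → IsEn (dir j).1 (dir j).2 (Rp j) (C j)
  hdiag : ∀ j, 1 ≤ j → j ≤ k → (C j).2 < (C j).1
  hval : ∀ j, 1 ≤ j → j ≤ k →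
    (dir j).1 ≤ (dir j).1 * ((C j).1 : ℤ) + (dir j).2 * ((C j).2 : ℤ)
  hG : ∀ j, 1 ≤ j → j ≤ k → ∃ (G : MvPolynomial (Fin 2) K) (i : ℕ), 1 ≤ i ∧
    IsHomog (dir j).1 (dir j).2 G ∧ Jb G (Rp j) = (Rp j) ^ i

/-- A point of `ℕ × ℕ` is a possible `A₀′` if it is the end point of some
admissible chain. -/
def PossibleA0 (K : Type*) [Field K] [CharZero K] (p : ℕ × ℕ) : Prop :=
  ∃ (k : ℕ) (ch : AdmChain K k), ch.C k = p

/-!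
Along one link of a chain write `R = x^e f(x^d)` and `G = x^e' g(x^d)` in multi-index notation,
with `f(0) ≠ 0`. With `θ = z d/dz`, the equation `[G, R] = R^i` becomes
`a f g + b (θ f) g + c f (θ g) = z^N f^i` for explicit integers `a`, `b`, `c`. Unless these satisfy
a resonance, the left-hand side has the same order at `0` and the same degree as `f g`, but at
every nonzero root of `f` its order is one less; by the right-hand side it has no other nonzero
roots, so it has fewer roots than its degree requires.

The resonance that must therefore occur bounds the slope of `d`: if the link leads from `(b + D, b)`
to `(b' + D', b')`, then `D < D'` and `b' + 1 ≤ (b + 1) (1 + D'^2)`. Since `b = 0` at the start,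
every point of a chain with `a' - b' = g` has `b' + 1 ≤ ∏ n ≤ g, (1 + n^2)`.
-/

open scoped Polynomial

/-! ### The Euler operator -/

section Theta

variable {R : Type*} [CommRing R]

/-- The Euler operator `θ = z d/dz` on polynomials in `z`. -/
def theta (p : R[X]) : R[X] :=
  Polynomial.X * Polynomial.derivative p

/-- The bilinear form `a f g + b (θ f) g + c f (θ g)`. For suitable integers `a`, `b`, `c` it is the
univariate counterpart of the Jacobian bracket of two homogeneous polynomials. -/
def thetaForm (a b c : R) (f g : R[X]) : R[X] :=
  Polynomial.C a * (f * g) + Polynomial.C b * (theta f * g) + Polynomial.C c * (f * theta g)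

lemma coeff_theta (p : R[X]) (n : ℕ) : (theta p).coeff n = n * p.coeff n := by
  cases n with
  | zero => simp [theta]
  | succ n =>
    rw [theta, Polynomial.coeff_X_mul, Polynomial.coeff_derivative]
    push_cast
    ring

lemma natDegree_theta_le (p : R[X]) : (theta p).natDegree ≤ p.natDegree :=
  Polynomial.natDegree_le_iff_coeff_eq_zero.2 fun n hn => by
    rw [coeff_theta, Polynomial.coeff_eq_zero_of_natDegree_lt hn, mul_zero]

lemma theta_X_pow_mul (n : ℕ) (p : R[X]) :
    theta (Polynomial.X ^ n * p) =
      Polynomial.X ^ n * (Polynomial.C (n : R) * p + theta p) := by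
  cases n with
  | zero => simp
  | succ n =>
    simp only [theta, Polynomial.derivative_mul, Polynomial.derivative_X_pow,
      Nat.add_sub_cancel]
    ring

lemma X_sub_C_mul_theta_X_sub_C_pow_mul (α : R) (n : ℕ) (p : R[X]) :
    (Polynomial.X - Polynomial.C α) * theta ((Polynomial.X - Polynomial.C α) ^ n * p) =
      (Polynomial.X - Polynomial.C α) ^ n * (Polynomial.C (n : R) * (Polynomial.X * p) +
        (Polynomial.X - Polynomial.C α) * theta p) := by
  cases n with
  | zero => simp
  | succ n =>
    simp only [theta, Polynomial.derivative_mul, Polynomial.derivative_X_sub_C_pow,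
      Nat.add_sub_cancel]
    ring

lemma thetaForm_X_pow_mul (a b c : R) (m n : ℕ) (u w : R[X]) :
    thetaForm a b c (Polynomial.X ^ m * u) (Polynomial.X ^ n * w) =
      Polynomial.X ^ (m + n) * thetaForm (a + b * m + c * n) b c u w := by
  simp only [thetaForm, theta_X_pow_mul, map_add, map_mul]
  ring

lemma X_sub_C_mul_thetaForm_X_sub_C_pow_mul (a b c α : R) (m n : ℕ) (u w : R[X]) :
    (Polynomial.X - Polynomial.C α) * thetaForm a b c ((Polynomial.X - Polynomial.C α) ^ m * u)
        ((Polynomial.X - Polynomial.C α) ^ n * w) =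
      (Polynomial.X - Polynomial.C α) ^ (m + n) *
        ((Polynomial.X - Polynomial.C α) * thetaForm a b c u w +
          Polynomial.C (b * m + c * n) * (Polynomial.X * (u * w))) := by
  have hu := X_sub_C_mul_theta_X_sub_C_pow_mul α m u
  have hw := X_sub_C_mul_theta_X_sub_C_pow_mul α n w
  simp only [thetaForm, map_add, map_mul]
  set T : R[X] := Polynomial.X - Polynomial.C α
  linear_combination (Polynomial.C b * (T ^ n * w)) * hu + (Polynomial.C c * (T ^ m * u)) * hw

lemma map_thetaForm {S : Type*} [CommRing S] (φ : R →+* S) (a b c : R) (f g : R[X]) :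
    (thetaForm a b c f g).map φ = thetaForm (φ a) (φ b) (φ c) (f.map φ) (g.map φ) := by
  simp [thetaForm, theta]

end Theta

section Order

variable {R : Type*} [CommRing R]

lemma rootMultiplicity_X_sub_C_pow_mul {α : R} {p : R[X]} (hp : p.eval α ≠ 0) (n : ℕ) :
    ((Polynomial.X - Polynomial.C α) ^ n * p).rootMultiplicity α = n := by
  have hp0 : p ≠ 0 := by rintro rfl; simp at hp
  rw [mul_comm, Polynomial.rootMultiplicity_mul_X_sub_C_pow hp0,
    Polynomial.rootMultiplicity_eq_zero hp, zero_add]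

lemma exists_eq_X_sub_C_pow_rootMultiplicity_mul {p : R[X]} (hp : p ≠ 0) (α : R) :
    ∃ q : R[X], p = (Polynomial.X - Polynomial.C α) ^ p.rootMultiplicity α * q ∧
      q.eval α ≠ 0 := by
  simpa only [Polynomial.dvd_iff_isRoot, Polynomial.IsRoot.def] using
    Polynomial.exists_eq_pow_rootMultiplicity_mul_and_not_dvd p hp α

variable [IsDomain R] {a b c : R} {f g : R[X]}

lemma rootMultiplicity_zero_thetaForm (hf : f ≠ 0) (hg : g ≠ 0)
    (h : a + b * f.rootMultiplicity 0 + c * g.rootMultiplicity 0 ≠ 0) :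
    (thetaForm a b c f g).rootMultiplicity 0 = f.rootMultiplicity 0 + g.rootMultiplicity 0 := by
  obtain ⟨u, hfu, hu⟩ := exists_eq_X_sub_C_pow_rootMultiplicity_mul hf 0
  obtain ⟨w, hgw, hw⟩ := exists_eq_X_sub_C_pow_rootMultiplicity_mul hg 0
  set m := f.rootMultiplicity 0
  set n := g.rootMultiplicity 0
  set E := thetaForm (a + b * m + c * n) b c u w with hE
  have hfactor : thetaForm a b c f g = (Polynomial.X - Polynomial.C 0) ^ (m + n) * E := by
    rw [hfu, hgw, Polynomial.C_0, sub_zero, thetaForm_X_pow_mul]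
  have hE0 : E.eval 0 = (a + b * m + c * n) * (u.eval 0 * w.eval 0) := by
    simp [hE, thetaForm, theta]
  rw [hfactor, rootMultiplicity_X_sub_C_pow_mul]
  rw [hE0]
  exact mul_ne_zero h (mul_ne_zero hu hw)

lemma rootMultiplicity_thetaForm_add_one {α : R} (hα : α ≠ 0) (hf : f ≠ 0) (hg : g ≠ 0)
    (h : b * f.rootMultiplicity α + c * g.rootMultiplicity α ≠ 0) :
    (thetaForm a b c f g).rootMultiplicity α + 1 =
      f.rootMultiplicity α + g.rootMultiplicity α := by
  obtain ⟨u, hfu, hu⟩ := exists_eq_X_sub_C_pow_rootMultiplicity_mul hf α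
  obtain ⟨w, hgw, hw⟩ := exists_eq_X_sub_C_pow_rootMultiplicity_mul hg α
  set m := f.rootMultiplicity α
  set n := g.rootMultiplicity α
  set T : R[X] := Polynomial.X - Polynomial.C α with hT
  set E : R[X] := T * thetaForm a b c u w +
    Polynomial.C (b * m + c * n) * (Polynomial.X * (u * w)) with hE
  have hfactor : T * thetaForm a b c f g = T ^ (m + n) * E := by
    rw [hfu, hgw, X_sub_C_mul_thetaForm_X_sub_C_pow_mul]
  have hEα : E.eval α ≠ 0 := by
    have : E.eval α = (b * m + c * n) * (α * (u.eval α * w.eval α)) := by simp [hE, hT]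
    rw [this]
    exact mul_ne_zero h (mul_ne_zero hα (mul_ne_zero hu hw))
  have hform : thetaForm a b c f g ≠ 0 := by
    have hE0 : E ≠ 0 := by rintro h0; simp [h0] at hEα
    refine right_ne_zero_of_mul (a := T) ?_
    rw [hfactor]
    exact mul_ne_zero (pow_ne_zero _ (Polynomial.X_sub_C_ne_zero α)) hE0
  rw [← Polynomial.rootMultiplicity_mul_X_sub_C_pow hform, pow_one, mul_comm, hfactor,
    rootMultiplicity_X_sub_C_pow_mul hEα]

lemma natDegree_thetaForm (hf : f ≠ 0) (hg : g ≠ 0)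
    (h : a + b * f.natDegree + c * g.natDegree ≠ 0) :
    (thetaForm a b c f g).natDegree = f.natDegree + g.natDegree := by
  have hθf := natDegree_theta_le f
  have hθg := natDegree_theta_le g
  have hCmul {q : R[X]} (r : R) (hq : q.natDegree ≤ f.natDegree + g.natDegree) :
      (Polynomial.C r * q).natDegree ≤ f.natDegree + g.natDegree :=
    (Polynomial.natDegree_C_mul_le _ _).trans hq
  apply Polynomial.natDegree_eq_of_le_of_coeff_ne_zero
  · exact Polynomial.natDegree_add_le_of_degree_le
      (Polynomial.natDegree_add_le_of_degree_le
        (hCmul a Polynomial.natDegree_mul_le)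
        (hCmul b (Polynomial.natDegree_mul_le_of_le hθf le_rfl)))
      (hCmul c (Polynomial.natDegree_mul_le_of_le le_rfl hθg))
  · have hcoeff : (thetaForm a b c f g).coeff (f.natDegree + g.natDegree) =
        (a + b * f.natDegree + c * g.natDegree) * (f.leadingCoeff * g.leadingCoeff) := by
      simp only [thetaForm, Polynomial.coeff_add, Polynomial.coeff_C_mul,
        Polynomial.coeff_mul_add_eq_of_natDegree_le le_rfl le_rfl,
        Polynomial.coeff_mul_add_eq_of_natDegree_le hθf le_rfl,
        Polynomial.coeff_mul_add_eq_of_natDegree_le le_rfl hθg, coeff_theta,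
        Polynomial.coeff_natDegree]
      ring
    rw [hcoeff]
    exact mul_ne_zero h (mul_ne_zero (Polynomial.leadingCoeff_ne_zero.2 hf)
      (Polynomial.leadingCoeff_ne_zero.2 hg))

lemma roots_thetaForm_add_singleton_le (hf : f ≠ 0) (hg : g ≠ 0) {α : R} (hα0 : α ≠ 0)
    (hα : f.IsRoot α)
    (hzero : a + b * f.rootMultiplicity 0 + c * g.rootMultiplicity 0 ≠ 0)
    (hroot : ∀ β, f.IsRoot β → b * f.rootMultiplicity β + c * g.rootMultiplicity β ≠ 0)
    (hJ : ∀ β ≠ 0, (thetaForm a b c f g).IsRoot β → f.IsRoot β) :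
    (thetaForm a b c f g).roots + {α} ≤ (f * g).roots := by
  classical
  refine Multiset.le_iff_count.2 fun β => ?_
  simp only [Multiset.count_add, Multiset.count_singleton, Polynomial.count_roots,
    Polynomial.rootMultiplicity_mul (mul_ne_zero hf hg)]
  rcases eq_or_ne β 0 with rfl | hβ
  · rw [rootMultiplicity_zero_thetaForm hf hg hzero, if_neg hα0.symm, add_zero]
  by_cases hβf : f.IsRoot β
  · rw [← rootMultiplicity_thetaForm_add_one hβ hf hg (hroot β hβf)]
    gcongr
    split_ifs <;> simp
  · rw [Polynomial.rootMultiplicity_eq_zero (mt (hJ β hβ) hβf),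
      if_neg (by rintro rfl; exact hβf hα)]
    exact Nat.zero_le _

end Order

/-! ### The univariate equation -/

section NonResonance

variable {F : Type*} [Field F] {a b c : F} {f g : F[X]}

theorem thetaForm_ne_X_pow_mul_pow_of_splits (hsplit : f.Splits) (hf0 : f.coeff 0 ≠ 0)
    (hdeg : 0 < f.natDegree) (hzero : ∀ n : ℕ, a + c * n ≠ 0)
    (hinfty : ∀ n : ℕ, a + b * f.natDegree + c * n ≠ 0)
    (hroot : ∀ m n : ℕ, 0 < m → m ≤ f.natDegree → b * m + c * n ≠ 0) (N i : ℕ) :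
    thetaForm a b c f g ≠ Polynomial.X ^ N * f ^ i := by
  intro heq
  have hf : f ≠ 0 := by rintro rfl; simp at hf0
  have hf_zero : ¬ f.IsRoot 0 := by
    rwa [Polynomial.IsRoot, ← Polynomial.coeff_zero_eq_eval_zero]
  have hg : g ≠ 0 := by
    rintro rfl
    refine mul_ne_zero (pow_ne_zero N Polynomial.X_ne_zero) (pow_ne_zero i hf) ?_
    rw [← heq]
    simp [thetaForm, theta]
  obtain ⟨α, hα⟩ := hsplit.exists_eval_eq_zero (Polynomial.degree_ne_of_natDegree_ne hdeg.ne')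
  have hroots : (thetaForm a b c f g).roots + {α} ≤ (f * g).roots := by
    refine roots_thetaForm_add_singleton_le hf hg (by rintro rfl; exact hf_zero hα) hα ?_
      (fun β hβ => hroot _ _ ((Polynomial.rootMultiplicity_pos hf).2 hβ) ?_) fun β hβ hJβ => ?_
    · simpa [Polynomial.rootMultiplicity_eq_zero hf_zero] using hzero (g.rootMultiplicity 0)
    · classical
      rw [← Polynomial.count_roots]
      exact (Multiset.count_le_card _ _).trans (Polynomial.card_roots' f)
    · rw [heq, Polynomial.IsRoot, Polynomial.eval_mul, Polynomial.eval_pow, Polynomial.eval_X,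
        Polynomial.eval_pow] at hJβ
      exact eq_zero_of_pow_eq_zero ((mul_eq_zero.1 hJβ).resolve_left (pow_ne_zero N hβ))
  have hJ_splits : (thetaForm a b c f g).Splits :=
    heq ▸ (Polynomial.Splits.X.pow N).mul (hsplit.pow i)
  have hcard := (Multiset.card_le_card hroots).trans (Polynomial.card_roots' _)
  rw [Multiset.card_add, Multiset.card_singleton, ← hJ_splits.natDegree_eq_card_roots,
    natDegree_thetaForm hf hg (hinfty _), Polynomial.natDegree_mul hf hg] at hcard
  omega

theorem thetaForm_ne_X_pow_mul_pow (hf0 : f.coeff 0 ≠ 0)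
    (hdeg : 0 < f.natDegree) (hzero : ∀ n : ℕ, a + c * n ≠ 0)
    (hinfty : ∀ n : ℕ, a + b * f.natDegree + c * n ≠ 0)
    (hroot : ∀ m n : ℕ, 0 < m → m ≤ f.natDegree → b * m + c * n ≠ 0) (N i : ℕ) :
    thetaForm a b c f g ≠ Polynomial.X ^ N * f ^ i := by
  intro heq
  set φ := algebraMap F (AlgebraicClosure F)
  have hφ {x : F} (hx : x ≠ 0) : φ x ≠ 0 := (map_ne_zero φ).2 hx
  refine thetaForm_ne_X_pow_mul_pow_of_splits (a := φ a) (b := φ b) (c := φ c) (f := f.map φ)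
    (g := g.map φ) (IsAlgClosed.splits _) (by simpa using hf0) (by simpa using hdeg)
    (fun n => by simpa using hφ (hzero n)) (fun n => by simpa using hφ (hinfty n))
    (fun m n hm hmf => by simpa using hφ (hroot m n hm (by simpa using hmf))) N i ?_
  rw [← map_thetaForm, heq]
  simp

lemma intCast_sub_mul_ne_zero {A : Type*} [AddGroupWithOne A] [CharZero A] {x v : ℤ}
    (h0 : 0 < x) (hx : x < v) (k : ℤ) : ((x - v * k : ℤ) : A) ≠ 0 := fun h =>
  (Int.le_of_dvd h0 ⟨k, sub_eq_zero.1 (Int.cast_eq_zero.1 h)⟩).not_gt hx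

-- Each of the three nonvanishing conditions says that some integer strictly between `0` and `v`
-- is not a multiple of `v`.
theorem thetaForm_intCast_ne_X_pow_mul_pow [CharZero F] {D s v : ℤ} (hD : 0 < D) (hs : 0 < s)
    (hv : D + f.natDegree * s < v) (hf0 : f.coeff 0 ≠ 0) (hdeg : 0 < f.natDegree) (N i : ℕ) :
    thetaForm ((N * v - D : ℤ) : F) (((i - 1) * v - s : ℤ) : F) ((-v : ℤ) : F) f g ≠
      Polynomial.X ^ N * f ^ i := by
  have hts : 0 < f.natDegree * s := by positivity
  refine thetaForm_ne_X_pow_mul_pow hf0 hdeg (fun n => ?_) (fun n => ?_) (fun m n hm hmf => ?_) N i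
  · convert neg_ne_zero.2 (intCast_sub_mul_ne_zero (A := F) hD (by linarith) (N - n)) using 1
    push_cast
    ring
  · convert neg_ne_zero.2 (intCast_sub_mul_ne_zero (A := F) (add_pos hD hts) hv
      (N + f.natDegree * (i - 1) - n)) using 1
    push_cast
    ring
  · have hms : m * s ≤ f.natDegree * s := by gcongr
    convert neg_ne_zero.2 (intCast_sub_mul_ne_zero (A := F) (x := m * s) (by positivity)
      (by linarith) (m * (i - 1) - n)) using 1
    push_cast
    ring

end NonResonance

/-! ### Polynomials supported on a ray -/

section Ray

variable {ι R : Type*} [CommRing R]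

/-- The polynomial `X^e · f(X^d)` in several variables, as a linear function of the univariate `f`.
Its support lies on the ray from `e` in direction `d`. -/
def ray (e d : ι →₀ ℕ) : R[X] →ₗ[R] MvPolynomial ι R :=
  LinearMap.mulLeft R (monomial e 1) ∘ₗ (Polynomial.aeval (monomial d (1 : R))).toLinearMap

lemma ray_apply (e d : ι →₀ ℕ) (f : R[X]) :
    ray e d f = monomial e 1 * Polynomial.aeval (monomial d (1 : R)) f := rfl

lemma ray_monomial (e d : ι →₀ ℕ) (k : ℕ) (r : R) :
    ray e d (Polynomial.monomial k r) = monomial (e + k • d) r := by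
  simp [ray_apply, Polynomial.aeval_monomial, monomial_pow, algebraMap_eq, C_mul_monomial,
    monomial_mul]

lemma finsupp_nsmul_left_injective {d : ι →₀ ℕ} (hd : d ≠ 0) :
    Function.Injective fun n : ℕ => n • d := by
  obtain ⟨j, hj⟩ := Finsupp.ne_iff.1 hd
  exact fun m n h => Nat.eq_of_mul_eq_mul_right (Nat.pos_of_ne_zero hj) (DFunLike.congr_fun h j)

lemma coeff_ray {d : ι →₀ ℕ} (hd : d ≠ 0) (e : ι →₀ ℕ) (f : R[X]) (k : ℕ) :
    coeff (e + k • d) (ray e d f) = f.coeff k := by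
  classical
  induction f using Polynomial.induction_on' with
  | add f g hf hg => rw [map_add, coeff_add, hf, hg, Polynomial.coeff_add]
  | monomial n r =>
    simp only [ray_monomial, coeff_monomial, Polynomial.coeff_monomial, add_right_inj,
      (finsupp_nsmul_left_injective hd).eq_iff]

lemma ray_injective {d : ι →₀ ℕ} (hd : d ≠ 0) (e : ι →₀ ℕ) :
    Function.Injective (ray e d : R[X] →ₗ[R] MvPolynomial ι R) := fun f g h =>
  Polynomial.ext fun k => by rw [← coeff_ray hd e f k, h, coeff_ray hd]

lemma mem_range_ray_iff {e d : ι →₀ ℕ} {P : MvPolynomial ι R} :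
    P ∈ LinearMap.range (ray e d) ↔ ∀ m ∈ P.support, ∃ k : ℕ, m = e + k • d := by
  classical
  constructor
  · rintro ⟨f, rfl⟩
    induction f using Polynomial.induction_on' with
    | add f g hf hg =>
      rw [map_add]
      exact fun m hm => (Finset.mem_union.1 (support_add hm)).elim (hf m) (hg m)
    | monomial n r =>
      rw [ray_monomial]
      exact fun m hm => ⟨n, Finset.mem_singleton.1 (support_monomial_subset hm)⟩
  · intro h
    rw [P.as_sum]
    refine Submodule.sum_mem _ fun m hm => ?_
    obtain ⟨k, hk⟩ := h m hm
    exact ⟨Polynomial.monomial k (coeff m P), by rw [ray_monomial, ← hk]⟩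

lemma ray_mul_ray (e e' d : ι →₀ ℕ) (f g : R[X]) :
    ray e d f * ray e' d g = ray (e + e') d (f * g) := by
  have : (monomial (e + e') 1 : MvPolynomial ι R) = monomial e 1 * monomial e' 1 := by
    simp [monomial_mul]
  rw [ray_apply, ray_apply, ray_apply, map_mul, this]
  ring

lemma ray_pow (e d : ι →₀ ℕ) (f : R[X]) (n : ℕ) : ray e d f ^ n = ray (n • e) d (f ^ n) := by
  rw [ray_apply, ray_apply, mul_pow, monomial_pow, one_pow, map_pow]

lemma ray_X_pow_mul (e d : ι →₀ ℕ) (N : ℕ) (f : R[X]) :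
    ray e d (Polynomial.X ^ N * f) = ray (e + N • d) d f := by
  have : (monomial (e + N • d) 1 : MvPolynomial ι R) = monomial e 1 * monomial d 1 ^ N := by
    simp [monomial_pow, monomial_mul]
  rw [ray_apply, ray_apply, map_mul, map_pow, Polynomial.aeval_X, this, mul_assoc]

lemma exists_eq_X_pow_mul_of_ray_eq_ray {d : ι →₀ ℕ} (hd : d ≠ 0) {e e' : ι →₀ ℕ} {f g : R[X]}
    (hg : g.coeff 0 ≠ 0) (h : ray e d f = ray e' d g) :
    ∃ N : ℕ, e' = e + N • d ∧ f = Polynomial.X ^ N * g := by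
  have hmem : e' ∈ (ray e d f).support := by
    have hcoeff := coeff_ray hd e' g 0
    rw [zero_smul, add_zero] at hcoeff
    rwa [h, mem_support_iff, hcoeff]
  obtain ⟨N, rfl⟩ := mem_range_ray_iff.1 ⟨f, rfl⟩ e' hmem
  exact ⟨N, rfl, ray_injective hd e (by rw [h, ray_X_pow_mul])⟩

lemma X_mul_pderiv_ray (e d : ι →₀ ℕ) (j : ι) (f : R[X]) :
    X j * pderiv j (ray e d f) =
      ray e d (Polynomial.C (e j : R) * f + Polynomial.C (d j : R) * theta f) := by
  induction f using Polynomial.induction_on' with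
  | add f g hf hg =>
    simp only [theta, map_add, mul_add] at hf hg ⊢
    rw [hf, hg]
    abel
  | monomial n r =>
    have htheta : theta (Polynomial.monomial n r) = Polynomial.monomial n (n * r) := by
      cases n <;> simp [theta, Polynomial.X_mul_monomial, mul_comm]
    rw [htheta, Polynomial.C_mul_monomial, Polynomial.C_mul_monomial, ← map_add, ray_monomial,
      ray_monomial, X_mul_pderiv_monomial, smul_monomial]
    congr 1
    simp only [Finsupp.coe_add, Finsupp.coe_smul, nsmul_eq_mul, Pi.add_apply, Pi.mul_apply,
      Pi.natCast_apply, Nat.cast_id, Nat.cast_add, Nat.cast_mul]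
    ring

lemma X_mul_X_mul_ray (e d : Fin 2 →₀ ℕ) (f : R[X]) :
    X 0 * X 1 * ray e d f = ray (Finsupp.single 0 1 + Finsupp.single 1 1 + e) d f := by
  have : (X 0 * X 1 : MvPolynomial (Fin 2) R) =
      ray (Finsupp.single 0 1 + Finsupp.single 1 1) d 1 := by
    simp [ray_apply, X, monomial_mul]
  rw [this, ray_mul_ray, one_mul]

end Ray

/-- The determinant `u₀w₁ - u₁w₀` of two exponent vectors. -/
def cross (u w : Fin 2 →₀ ℕ) : ℤ := u 0 * w 1 - u 1 * w 0

section JacobianRay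

variable {F : Type*} [Field F]

lemma X_mul_X_mul_Jb_ray (e e' d : Fin 2 →₀ ℕ) (f g : F[X]) :
    X 0 * X 1 * Jb (ray e' d g) (ray e d f) =
      ray (e' + e) d (thetaForm (cross e' e : F) (cross e' d : F) (cross d e : F) f g) := by
  calc X 0 * X 1 * Jb (ray e' d g) (ray e d f)
      = (X 0 * pderiv 0 (ray e' d g)) * (X 1 * pderiv 1 (ray e d f)) -
          (X 1 * pderiv 1 (ray e' d g)) * (X 0 * pderiv 0 (ray e d f)) := by rw [Jb]; ring
    _ = _ := by
      simp only [X_mul_pderiv_ray, ray_mul_ray, ← map_sub]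
      congr 1
      simp only [thetaForm, cross, Int.cast_sub, Int.cast_mul, Int.cast_natCast, map_sub, map_mul]
      ring

theorem cross_le_of_Jb_ray_eq_pow [CharZero F] {e d e' : Fin 2 →₀ ℕ} {f g : F[X]} {i : ℕ}
    (he : e 1 < e 0) (hd : d 1 < d 0) (hf0 : f.coeff 0 ≠ 0) (hdeg : 0 < f.natDegree)
    (h : Jb (ray e' d g) (ray e d f) = ray e d f ^ i) :
    cross e d ≤ (e 0 - e 1) + f.natDegree * (d 0 - d 1) := by
  have hd0 : d ≠ 0 := by rintro rfl; simp at hd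
  have hray := congrArg (X 0 * X 1 * ·) h
  simp only [ray_pow, X_mul_X_mul_ray, X_mul_X_mul_Jb_ray] at hray
  obtain ⟨N, hexp, hform⟩ := exists_eq_X_pow_mul_of_ray_eq_ray hd0
    (by rw [Polynomial.coeff_zero_eq_eval_zero, Polynomial.eval_pow,
      ← Polynomial.coeff_zero_eq_eval_zero]; exact pow_ne_zero i hf0) hray
  have hexp0 : (1 + i * e 0 : ℤ) = e' 0 + e 0 + N * d 0 := by
    simpa [← Nat.cast_inj (R := ℤ)] using DFunLike.congr_fun hexp 0
  have hexp1 : (1 + i * e 1 : ℤ) = e' 1 + e 1 + N * d 1 := by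
    simpa [← Nat.cast_inj (R := ℤ)] using DFunLike.congr_fun hexp 1
  have ha : cross e' e = N * cross e d - (e 0 - e 1) := by
    unfold cross
    linear_combination (e 0 : ℤ) * hexp1 - e 1 * hexp0
  have hb : cross e' d = (i - 1) * cross e d - (d 0 - d 1) := by
    unfold cross
    linear_combination (d 0 : ℤ) * hexp1 - d 1 * hexp0
  have hc : cross d e = -cross e d := by
    unfold cross
    ring
  by_contra! hv
  rw [ha, hb, hc] at hform
  exact thetaForm_intCast_ne_X_pow_mul_pow (by omega) (by omega) hv hf0 hdeg N i hform

end JacobianRay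

/-! ### Homogeneous polynomials in two variables -/

section Lattice

variable {F : Type*} [Field F] {c d p q : ℕ × ℕ}

/-- The exponent vector of the monomial `x^i y^j` attached to the pair `(i, j)`, written as in the
definition of `Supp`. -/
def expo (p : ℕ × ℕ) : Fin 2 →₀ ℕ :=
  Finsupp.single 0 p.1 + Finsupp.single 1 p.2

@[simp]
lemma expo_apply_zero (p : ℕ × ℕ) : expo p 0 = p.1 := by simp [expo]

@[simp]
lemma expo_apply_one (p : ℕ × ℕ) : expo p 1 = p.2 := by simp [expo]

lemma expo_injective : Function.Injective expo := fun p q h =>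
  Prod.ext (by simpa using DFunLike.congr_fun h 0) (by simpa using DFunLike.congr_fun h 1)

lemma exists_expo_eq (m : Fin 2 →₀ ℕ) : ∃ p, expo p = m :=
  ⟨(m 0, m 1), by ext j; fin_cases j <;> simp⟩

lemma expo_add_nsmul (p d : ℕ × ℕ) (k : ℕ) : expo (p + k • d) = expo p + k • expo d := by
  ext j
  fin_cases j <;> simp

lemma expo_ne_zero (hd : 0 < d.2) : expo d ≠ 0 := fun h => by
  simpa [hd.ne'] using DFunLike.congr_fun h 1

lemma mem_Supp_iff {P : MvPolynomial (Fin 2) F} : p ∈ Supp P ↔ expo p ∈ P.support :=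
  mem_support_iff.symm

lemma add_nsmul_mem_Supp_ray_iff (hd : 0 < d.2) {f : F[X]} {k : ℕ} :
    c + k • d ∈ Supp (ray (expo c) (expo d) f) ↔ f.coeff k ≠ 0 := by
  rw [mem_Supp_iff, expo_add_nsmul, mem_support_iff, coeff_ray (expo_ne_zero hd)]

lemma exists_eq_add_nsmul_of_mem_Supp_ray {f : F[X]} (hp : p ∈ Supp (ray (expo c) (expo d) f)) :
    ∃ k : ℕ, p = c + k • d := by
  obtain ⟨k, hk⟩ := mem_range_ray_iff.1 ⟨f, rfl⟩ _ (mem_Supp_iff.1 hp)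
  exact ⟨k, expo_injective (hk.trans (expo_add_nsmul c d k).symm)⟩

lemma exists_eq_add_nsmul_of_weight_eq (hcop : d.1.Coprime d.2) (hd : 0 < d.2) (hpq : p.2 ≤ q.2)
    (h : (d.2 : ℤ) * p.1 + -d.1 * p.2 = d.2 * q.1 + -d.1 * q.2) : ∃ k : ℕ, q = p + k • d := by
  obtain ⟨y, hy⟩ := Nat.exists_eq_add_of_le hpq
  have hmul : (d.2 : ℤ) * (q.1 - p.1) = d.1 * y := by
    push_cast [hy] at h
    linarith
  obtain ⟨k, rfl⟩ : d.2 ∣ y := by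
    refine hcop.symm.dvd_of_dvd_mul_left ?_
    exact_mod_cast Dvd.intro _ hmul
  have hfst : (q.1 : ℤ) - p.1 = d.1 * k := by
    refine mul_left_cancel₀ (Nat.cast_ne_zero.2 hd.ne' : (d.2 : ℤ) ≠ 0) ?_
    rw [hmul]
    push_cast
    ring
  refine ⟨k, Prod.ext ?_ ?_⟩
  · zify
    simp only [Prod.fst_add, Prod.smul_fst, smul_eq_mul, Nat.cast_add, Nat.cast_mul]
    linarith
  · simp [hy, mul_comm]

end Lattice

section Homogeneous

variable {F : Type*} [Field F] {c c' d p : ℕ × ℕ} {P : MvPolynomial (Fin 2) F}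

lemma IsHomog.leadSupp_eq {ρ σ : ℤ} (hP : IsHomog ρ σ P) (hp : p ∈ LeadSupp ρ σ P) :
    LeadSupp ρ σ P = Supp P :=
  Set.Subset.antisymm (fun _ hq => hq.1) fun q hq => ⟨hq, (hP q hq p hp.1).trans hp.2⟩

lemma IsHomog.exists_eq_ray_of_forall_le (hcop : d.1.Coprime d.2) (hd : 0 < d.2)
    (hP : IsHomog d.2 (-d.1) P) (hp : p ∈ Supp P) (hmin : ∀ q ∈ Supp P, p.2 ≤ q.2) :
    ∃ f : F[X], P = ray (expo p) (expo d) f := by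
  suffices P ∈ LinearMap.range (ray (expo p) (expo d)) from this.imp fun _ => Eq.symm
  refine mem_range_ray_iff.2 fun m hm => ?_
  obtain ⟨q, rfl⟩ := exists_expo_eq m
  obtain ⟨k, rfl⟩ := exists_eq_add_nsmul_of_weight_eq hcop hd (hmin q (mem_Supp_iff.2 hm))
    (hP p hp q (mem_Supp_iff.2 hm))
  exact ⟨k, expo_add_nsmul p d k⟩

lemma IsHomog.exists_eq_ray (hcop : d.1.Coprime d.2) (hd : 0 < d.2) (hP : IsHomog d.2 (-d.1) P) :
    ∃ (e : Fin 2 →₀ ℕ) (f : F[X]), P = ray e (expo d) f := by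
  rcases (Supp P).eq_empty_or_nonempty with hempty | hne
  · have hP0 : P = 0 := by
      ext m
      obtain ⟨p, rfl⟩ := exists_expo_eq m
      exact not_not.1 (Set.eq_empty_iff_forall_notMem.1 hempty p)
    exact ⟨0, 0, by rw [hP0, map_zero]⟩
  · obtain ⟨p, hp, hmin⟩ := (measure (Prod.snd : ℕ × ℕ → ℕ)).wf.has_min (Supp P) hne
    exact ⟨expo p, hP.exists_eq_ray_of_forall_le hcop hd hp fun q hq => not_lt.1 (hmin q hq)⟩

theorem IsHomog.exists_eq_ray_of_isSt_of_isEn (hcop : d.1.Coprime d.2) (hd : 0 < d.2)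
    (hP : IsHomog d.2 (-d.1) P) (hmono : ¬ IsMonomial P) (hst : IsSt d.2 (-d.1) P c)
    (hen : IsEn d.2 (-d.1) P c') :
    ∃ f : F[X], P = ray (expo c) (expo d) f ∧ f.coeff 0 ≠ 0 ∧ 0 < f.natDegree ∧
      c' = c + f.natDegree • d := by
  have hlead := hP.leadSupp_eq hst.1
  rw [IsSt, hlead] at hst
  rw [IsEn, hlead] at hen
  obtain ⟨f, rfl⟩ := hP.exists_eq_ray_of_forall_le hcop hd hst.1 hst.2
  have hf0 : f.coeff 0 ≠ 0 :=
    (add_nsmul_mem_Supp_ray_iff hd).1 (by rw [zero_smul, add_zero]; exact hst.1)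
  have hsupp {p : ℕ × ℕ} (hp : p ∈ Supp (ray (expo c) (expo d) f)) :
      ∃ k ≤ f.natDegree, p = c + k • d := by
    obtain ⟨k, rfl⟩ := exists_eq_add_nsmul_of_mem_Supp_ray hp
    exact ⟨k, Polynomial.le_natDegree_of_ne_zero ((add_nsmul_mem_Supp_ray_iff hd).1 hp), rfl⟩
  refine ⟨f, rfl, hf0, Nat.pos_of_ne_zero fun hdeg => hmono fun p hp q hq => ?_, ?_⟩
  · obtain ⟨k, hk, rfl⟩ := hsupp hp
    obtain ⟨n, hn, rfl⟩ := hsupp hq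
    rw [hdeg, Nat.le_zero] at hk hn
    rw [hk, hn]
  · obtain ⟨k, hk, rfl⟩ := hsupp hen.1
    have htop : c + f.natDegree • d ∈ Supp (ray (expo c) (expo d) f) := by
      rw [add_nsmul_mem_Supp_ray_iff hd, Polynomial.coeff_natDegree,
        Polynomial.leadingCoeff_ne_zero]
      rintro rfl
      exact hf0 rfl
    have hle : f.natDegree * d.2 ≤ k * d.2 := by simpa using hen.2 _ htop
    rw [le_antisymm hk (Nat.le_of_mul_le_mul_right hle hd)]

end Homogeneous

/-! ### Links of a chain -/

section Link

variable {F : Type*} [Field F] {c c' p : ℕ × ℕ}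

/-- One link `C_{j-1} ⟶ C_j` of an admissible chain over `F`: only the conditions (iii)-(v) and
(viii) on a single polynomial and its direction are kept, and `i = 0` is allowed in (viii). -/
def IsLink (F : Type*) [Field F] (c c' : ℕ × ℕ) : Prop :=
  ∃ (ρ σ : ℤ) (R G : MvPolynomial (Fin 2) F) (i : ℕ),
    Int.gcd ρ σ = 1 ∧ 0 < ρ ∧ ρ + σ < 0 ∧
    IsHomog ρ σ R ∧ ¬ IsMonomial R ∧ IsSt ρ σ R c ∧ IsEn ρ σ R c' ∧
    IsHomog ρ σ G ∧ Jb G R = R ^ i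

theorem IsLink.exists_eq_add_nsmul [CharZero F] (h : IsLink F c c') (hc : c.2 < c.1) :
    ∃ (d : ℕ × ℕ) (t : ℕ), 0 < t ∧ d.2 < d.1 ∧ c' = c + t • d ∧
      (c.1 * d.2 - c.2 * d.1 : ℤ) ≤ (c.1 - c.2) + t * (d.1 - d.2) := by
  obtain ⟨ρ, σ, R, G, i, hcop, hρ, hρσ, hR, hmono, hst, hen, hG, hJ⟩ := h
  lift ρ to ℕ using hρ.le
  obtain ⟨q, rfl⟩ : ∃ q : ℕ, σ = -q := ⟨σ.natAbs, by omega⟩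
  set d : ℕ × ℕ := (q, ρ)
  have hdcop : d.1.Coprime d.2 := by
    rwa [Int.gcd_neg, Int.gcd_natCast_natCast, Nat.gcd_comm] at hcop
  have hd : 0 < d.2 := by exact_mod_cast hρ
  have hd' : d.2 < d.1 := by zify; linarith
  obtain ⟨f, rfl, hf0, hdeg, hc'⟩ :=
    hR.exists_eq_ray_of_isSt_of_isEn (d := d) hdcop hd hmono hst hen
  obtain ⟨e', g, rfl⟩ := hG.exists_eq_ray (d := d) hdcop hd
  refine ⟨d, f.natDegree, hdeg, hd', hc', ?_⟩
  simpa [cross] using cross_le_of_Jb_ray_eq_pow (e := expo c) (d := expo d) (by simpa using hc)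
    (by simpa using hd') hf0 hdeg hJ

lemma IsLink.sub_lt_sub [CharZero F] (h : IsLink F c c') (hc : c.2 < c.1) :
    c.1 - c.2 < c'.1 - c'.2 := by
  obtain ⟨d, t, ht, hd, rfl, -⟩ := h.exists_eq_add_nsmul hc
  have : t * d.2 < t * d.1 := by gcongr
  simp only [Prod.fst_add, Prod.snd_add, Prod.smul_fst, Prod.smul_snd, smul_eq_mul]
  omega

lemma add_mul_add_one_le_mul_one_add_sq {b t r s D : ℕ} (hs : 0 < s) (hD : 0 < D)
    (h : D * r ≤ D + t * s + b * s) : b + t * r + 1 ≤ (b + 1) * (1 + (D + t * s) ^ 2) := by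
  set E := D + t * s
  have htE : t * s ≤ E := Nat.le_add_left _ _
  have ht : t ≤ E := (Nat.le_mul_of_pos_right t hs).trans htE
  have hEE : E ≤ E ^ 2 := Nat.le_self_pow two_ne_zero E
  calc b + t * r + 1 ≤ b + t * (D * r) + 1 := by
        gcongr
        exact Nat.le_mul_of_pos_left r hD
    _ ≤ b + t * (E + b * s) + 1 := by gcongr
    _ = b + (t * E + b * (t * s)) + 1 := by ring
    _ ≤ b + (E * E + b * E ^ 2) + 1 := by gcongr; exact htE.trans hEE
    _ = (b + 1) * (1 + E ^ 2) := by ring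

lemma IsLink.snd_add_one_le [CharZero F] (h : IsLink F c c') (hc : c.2 < c.1) :
    c'.2 + 1 ≤ (c.2 + 1) * (1 + (c'.1 - c'.2) ^ 2) := by
  obtain ⟨d, t, -, hd, rfl, hcross⟩ := h.exists_eq_add_nsmul hc
  obtain ⟨D, hD⟩ := Nat.exists_eq_add_of_le hc.le
  obtain ⟨s, hs⟩ := Nat.exists_eq_add_of_le hd.le
  have hgap : (c + t • d).1 - (c + t • d).2 = D + t * s := by
    simp only [Prod.fst_add, Prod.snd_add, Prod.smul_fst, Prod.smul_snd, smul_eq_mul, hD, hs,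
      mul_add]
    omega
  rw [hgap]
  simp only [Prod.snd_add, Prod.smul_snd, smul_eq_mul]
  refine add_mul_add_one_le_mul_one_add_sq (by omega) (by omega) ?_
  zify
  push_cast [hD, hs] at hcross
  linarith

theorem snd_lt_fst_and_snd_add_one_le_prod [CharZero F] {l : ℕ} (hl : 1 ≤ l)
    (h : Relation.ReflTransGen (IsLink F) (l, 0) p) :
    p.2 < p.1 ∧ p.2 + 1 ≤ ∏ n ∈ Finset.range (p.1 - p.2 + 1), (1 + n ^ 2) := by
  induction h with
  | refl => exact ⟨hl, by simpa using Finset.one_le_prod' fun n _ => Nat.le_add_right 1 (n ^ 2)⟩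
  | @tail c c' _ hlink ih =>
    obtain ⟨hc, hbound⟩ := ih
    have hlt := hlink.sub_lt_sub hc
    refine ⟨by omega, ?_⟩
    calc c'.2 + 1 ≤ (c.2 + 1) * (1 + (c'.1 - c'.2) ^ 2) := hlink.snd_add_one_le hc
      _ ≤ (∏ n ∈ Finset.range (c.1 - c.2 + 1), (1 + n ^ 2)) * (1 + (c'.1 - c'.2) ^ 2) := by gcongr
      _ ≤ (∏ n ∈ Finset.range (c'.1 - c'.2), (1 + n ^ 2)) * (1 + (c'.1 - c'.2) ^ 2) := by
        refine Nat.mul_le_mul_right _ (Finset.prod_le_prod_of_subset_of_one_le'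
          (Finset.range_mono hlt) fun n _ _ => Nat.le_add_right 1 (n ^ 2))
      _ = ∏ n ∈ Finset.range (c'.1 - c'.2 + 1), (1 + n ^ 2) := (Finset.prod_range_succ _ _).symm

end Link

lemma AdmChain.isLink {k j : ℕ} (ch : AdmChain K k) (hj : j < k) :
    IsLink K (ch.C j) (ch.C (j + 1)) := by
  have h1 : 1 ≤ j + 1 := Nat.le_add_left 1 j
  obtain ⟨hcop, hρ, hρσ⟩ := ch.hdir (j + 1) h1 hj
  obtain ⟨G, i, -, hG, hJ⟩ := ch.hG (j + 1) h1 hj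
  exact ⟨_, _, ch.Rp (j + 1), G, i, hcop, hρ, hρσ, ch.hhom _ h1 hj, ch.hmono _ h1 hj,
    ch.hst _ h1 hj, ch.hen _ h1 hj, hG, hJ⟩

lemma AdmChain.reflTransGen {k j : ℕ} (ch : AdmChain K k) (hj : j ≤ k) :
    Relation.ReflTransGen (IsLink K) (ch.C 0) (ch.C j) := by
  induction j with
  | zero => exact .refl
  | succ j ih => exact (ih (Nat.le_of_succ_le hj)).tail (ch.isLink hj)

lemma PossibleA0.exists_reflTransGen {p : ℕ × ℕ} (h : PossibleA0 K p) :
    ∃ l : ℕ, 1 ≤ l ∧ Relation.ReflTransGen (IsLink K) (l, 0) p := by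
  obtain ⟨k, ch, rfl⟩ := h
  obtain ⟨l, hl, hC0⟩ := ch.hC0
  exact ⟨l, hl, hC0 ▸ ch.reflTransGen le_rfl⟩

theorem stmt15_general (K : Type*) [Field K] [CharZero K] (g : ℕ) :
    {p : ℕ × ℕ | (p.1 : ℤ) - (p.2 : ℤ) = g ∧
      ∃ l : ℕ, 1 ≤ l ∧ Relation.ReflTransGen (IsLink K) (l, 0) p}.Finite := by
  set B := ∏ n ∈ Finset.range (g + 1), (1 + n ^ 2)
  refine ((Set.finite_Iic (g + B)).prod (Set.finite_Iic B)).subset ?_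
  rintro p ⟨hg, l, hl, hp⟩
  obtain ⟨-, hbound⟩ := snd_lt_fst_and_snd_add_one_le_prod hl hp
  rw [show p.1 - p.2 = g by omega] at hbound
  exact ⟨Set.mem_Iic.2 (by omega), Set.mem_Iic.2 (by omega)⟩

/-- For every `g ≥ 1` there are only finitely many possible `A₀′` with
`a' − b' = g`. -/
theorem stmt15 (K : Type*) [Field K] [CharZero K] (g : ℕ) (hg : 1 ≤ g) :
    {p : ℕ × ℕ | (p.1 : ℤ) - (p.2 : ℤ) = g ∧ PossibleA0 K p}.Finite :=
  (stmt15_general K g).subset fun _ hp => ⟨hp.1, hp.2.exists_reflTransGen⟩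

end
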